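/- Pointwise comparison of connection differences (Lemma 3.5): let g, g̃ be C¹ Hermitian positive-definite n×n matrix fields and β, β̃ be C¹ antisymmetric n×n matrix fields on U, with generalized metrics G := G(g,β) and G̃ := G(g̃,β̃). Fix Λ ≥ 1 and suppose at a point z ∈ U that Λ⁻¹·g̃ ≤ g ≤ Λ·g̃ (in the Loewner order) and |β|²_g := Σ β_{ik}·conj(β_{jl})·g^{j̄i}·g^{l̄k} ≤ Λ. Then there exists a constant K, depending only on n, Λ, and upper bounds at z for the entries of g̃, g̃⁻¹, β̃ and their first Wirtinger derivatives, such that |Υ^g|²_g ≤ Λ²·|Υ|²_{g⁻¹,G⁻¹,G} + K at z, where Υ^gᵢ{}_a{}^p := Σ_q(∂ᵢg_{aq̄}·g^{q̄p} − ∂ᵢg̃_{aq̄}·g̃^{q̄p}), |Υ^g|²_g := Σ g^{j̄i}·g^{b̄a}·g_{pq̄}·Υ^gᵢ{}_a{}^p·conj(Υ^gⱼ{}_b{}^q), and Υ is the difference of the Chern connections of G and G̃. -/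

import Mathlib

open Matrix
open scoped ComplexOrder

noncomputable section

/-- The generalized metric associated to a Hermitian metric `g` and a `(2,0)`-form
(antisymmetric matrix) `β`, as a `2n × 2n` block matrix on `T ⊕ T*`. -/
def genMetric {n : ℕ} (g β : Matrix (Fin n) (Fin n) ℂ) :
    Matrix (Fin n ⊕ Fin n) (Fin n ⊕ Fin n) ℂ :=
  Matrix.fromBlocks (g + β * (g⁻¹).map (starRingEnd ℂ) * βᴴ) (β * (g⁻¹).map (starRingEnd ℂ))
    ((g⁻¹).map (starRingEnd ℂ) * βᴴ) ((g⁻¹).map (starRingEnd ℂ))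

/-- The Wirtinger derivative `∂ᵢ f = ½(∂f/∂xᵢ − i·∂f/∂yᵢ)` of a function `f : ℂⁿ → ℂ`,
computed via the real Fréchet derivative. -/
def wd {n : ℕ} (i : Fin n) (f : (Fin n → ℂ) → ℂ) (z : Fin n → ℂ) : ℂ :=
  (fderiv ℝ f z (Pi.single i 1) - Complex.I * fderiv ℝ f z (Pi.single i Complex.I)) / 2

/-- The conjugate Wirtinger derivative `∂_{ī} f = ½(∂f/∂xᵢ + i·∂f/∂yᵢ)`. -/
def wdb {n : ℕ} (i : Fin n) (f : (Fin n → ℂ) → ℂ) (z : Fin n → ℂ) : ℂ :=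
  (fderiv ℝ f z (Pi.single i 1) + Complex.I * fderiv ℝ f z (Pi.single i Complex.I)) / 2

/-- Lowered Chern curvature `Ω^h_{ij̄αβ̄} = −∂ᵢ∂_{j̄}h_{αβ̄} + Σ ∂ᵢh_{αγ̄}·h^{γ̄δ}·∂_{j̄}h_{δβ̄}`
of a Hermitian matrix field `h`, where `h^{γ̄δ} = (h⁻¹) γ δ`. -/
def chern {n : ℕ} {ι : Type*} [Fintype ι] [DecidableEq ι]
    (h : (Fin n → ℂ) → Matrix ι ι ℂ) (i j : Fin n) (a b : ι) (z : Fin n → ℂ) : ℂ :=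
  - wd i (fun w => wdb j (fun v => h v a b) w) z
    + ∑ c : ι, ∑ d : ι, wd i (fun w => h w a c) z * (h z)⁻¹ c d * wdb j (fun w => h w d b) z

/-- Chern torsion `T_{ijk̄} = ∂ᵢ g_{jk̄} − ∂ⱼ g_{ik̄}`. -/
def torsion {n : ℕ} (g : (Fin n → ℂ) → Matrix (Fin n) (Fin n) ℂ)
    (i j k : Fin n) (z : Fin n → ℂ) : ℂ :=
  wd i (fun w => g w j k) z - wd j (fun w => g w i k) z

/-- `β` is a torsion potential for `g` on `U`: `∂_{k̄} β_{ij} = T_{ijk̄}` on `U`. -/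
def IsTorsionPotential {n : ℕ} (g β : (Fin n → ℂ) → Matrix (Fin n) (Fin n) ℂ)
    (U : Set (Fin n → ℂ)) : Prop :=
  ∀ z ∈ U, ∀ i j k : Fin n, wdb k (fun w => β w i j) z = torsion g i j k z

/-- Second Chern covariant derivative
`∇ᵢ∇_{j̄}β_{ab} = ∂ᵢ∂_{j̄}β_{ab} − Σ g^{k̄l}·∂ᵢg_{ak̄}·∂_{j̄}β_{lb} − Σ g^{k̄l}·∂ᵢg_{bk̄}·∂_{j̄}β_{al}`. -/
def nabla2beta {n : ℕ} (g β : (Fin n → ℂ) → Matrix (Fin n) (Fin n) ℂ)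
    (i j a b : Fin n) (z : Fin n → ℂ) : ℂ :=
  wd i (fun w => wdb j (fun v => β v a b) w) z
    - ∑ k : Fin n, ∑ l : Fin n, (g z)⁻¹ k l * wd i (fun w => g w a k) z * wdb j (fun w => β w l b) z
    - ∑ k : Fin n, ∑ l : Fin n, (g z)⁻¹ k l * wd i (fun w => g w b k) z * wdb j (fun w => β w a l) z

/-- Difference of Chern connections `Υᵢ{}_A{}^D = Σ_C (∂ᵢG_{AC̄}·G^{C̄D} − ∂ᵢG̃_{AC̄}·G̃^{C̄D})`. -/
def UpsS {n : ℕ} {ι : Type*} [Fintype ι] [DecidableEq ι]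
    (G Gt : (Fin n → ℂ) → Matrix ι ι ℂ) (i : Fin n) (A D : ι) (z : Fin n → ℂ) : ℂ :=
  ∑ C : ι, (wd i (fun w => G w A C) z * (G z)⁻¹ C D
    - wd i (fun w => Gt w A C) z * (Gt z)⁻¹ C D)

/-- `|Υ|²_{g⁻¹,G⁻¹,H} = Σ g^{j̄i}·G^{B̄A}·H_{DĒ}·Υᵢ{}_A{}^D·conj(Υⱼ{}_B{}^E)`. -/
def upsNormS {n : ℕ} {ι : Type*} [Fintype ι] [DecidableEq ι]
    (g : (Fin n → ℂ) → Matrix (Fin n) (Fin n) ℂ)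
    (G Gt H : (Fin n → ℂ) → Matrix ι ι ℂ) (z : Fin n → ℂ) : ℂ :=
  ∑ i : Fin n, ∑ j : Fin n, ∑ A : ι, ∑ B : ι, ∑ D : ι, ∑ E : ι,
    (g z)⁻¹ j i * (G z)⁻¹ B A * H z D E * UpsS G Gt i A D z *
      (starRingEnd ℂ) (UpsS G Gt j B E z)

/-- `f` and its first Wirtinger derivatives are bounded by `B` at `z`. -/
def BoundedDerivs1 {n : ℕ} (B : ℝ) (f : (Fin n → ℂ) → ℂ) (z : Fin n → ℂ) : Prop :=
  ‖f z‖ ≤ B ∧ ∀ i : Fin n, ‖wd i f z‖ ≤ B ∧ ‖wdb i f z‖ ≤ B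


/-- Entrywise Wirtinger derivative of a matrix field. -/
def wdM {n : ℕ} {ι κ : Type*} (i : Fin n) (F : (Fin n → ℂ) → Matrix ι κ ℂ) (z : Fin n → ℂ) :
    Matrix ι κ ℂ := Matrix.of fun a b => wd i (fun w => F w a b) z

/-- Entrywise differentiability of a matrix field. -/
def DiffM {n : ℕ} {ι κ : Type*} (F : (Fin n → ℂ) → Matrix ι κ ℂ) (z : Fin n → ℂ) : Prop :=
  ∀ a b, DifferentiableAt ℝ (fun w => F w a b) z

theorem wd_const' {n : ℕ} (i : Fin n) (c : ℂ) (z : Fin n → ℂ) : wd i (fun _ => c) z = 0 := by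
  simp [wd]

theorem wd_sum' {n : ℕ} {ι : Type*} (s : Finset ι) (i : Fin n) (f : ι → (Fin n → ℂ) → ℂ)
    (z : Fin n → ℂ) (h : ∀ c ∈ s, DifferentiableAt ℝ (f c) z) :
    wd i (fun w => ∑ c ∈ s, f c w) z = ∑ c ∈ s, wd i (f c) z := by
  unfold wd
  rw [fderiv_fun_sum h]
  simp only [_root_.sum_apply, Finset.mul_sum, ← Finset.sum_sub_distrib,
    Finset.sum_div]

theorem wd_mul' {n : ℕ} (i : Fin n) (f k : (Fin n → ℂ) → ℂ) (z : Fin n → ℂ)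
    (hf : DifferentiableAt ℝ f z) (hk : DifferentiableAt ℝ k z) :
    wd i (fun w => f w * k w) z = wd i f z * k z + f z * wd i k z := by
  unfold wd
  rw [fderiv_fun_mul hf hk]
  simp
  ring

theorem wd_conj' {n : ℕ} (i : Fin n) (f : (Fin n → ℂ) → ℂ) (z : Fin n → ℂ)
    (hf : DifferentiableAt ℝ f z) :
    wd i (fun w => (starRingEnd ℂ) (f w)) z = (starRingEnd ℂ) (wdb i f z) := by
  have h := (Complex.conjCLE.toContinuousLinearMap.hasFDerivAt.comp z hf.hasFDerivAt).fderiv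
  have h' : fderiv ℝ (fun w => (starRingEnd ℂ) (f w)) z
      = Complex.conjCLE.toContinuousLinearMap.comp (fderiv ℝ f z) := h
  unfold wd wdb
  rw [h']
  have h2 : (starRingEnd ℂ) (2 : ℂ) = 2 := Complex.conj_ofNat 2
  simp [h2]
  ring

theorem diff_conj' {n : ℕ} (f : (Fin n → ℂ) → ℂ) (z : Fin n → ℂ)
    (hf : DifferentiableAt ℝ f z) :
    DifferentiableAt ℝ (fun w => (starRingEnd ℂ) (f w)) z :=
  (Complex.conjCLE.toContinuousLinearMap.hasFDerivAt.comp z hf.hasFDerivAt).differentiableAt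

theorem wd_congr' {n : ℕ} (i : Fin n) {f k : (Fin n → ℂ) → ℂ} {z : Fin n → ℂ}
    (h : f =ᶠ[nhds z] k) : wd i f z = wd i k z := by
  unfold wd
  rw [h.fderiv_eq]

theorem wdM_congr {n : ℕ} {ι κ : Type*} (i : Fin n) {F K : (Fin n → ℂ) → Matrix ι κ ℂ}
    {z : Fin n → ℂ} (h : F =ᶠ[nhds z] K) : wdM i F z = wdM i K z := by
  ext a b
  exact wd_congr' i (h.mono fun w hw => by simp only [hw])

theorem DiffM.congr {n : ℕ} {ι κ : Type*} {F K : (Fin n → ℂ) → Matrix ι κ ℂ}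
    {z : Fin n → ℂ} (hK : DiffM K z) (h : F =ᶠ[nhds z] K) : DiffM F z := by
  intro a b
  exact (hK a b).congr_of_eventuallyEq (h.mono fun w hw => by simp only [hw])

theorem DiffM.mul {n : ℕ} {ι κ μ : Type*} [Fintype κ] {F : (Fin n → ℂ) → Matrix ι κ ℂ}
    {K : (Fin n → ℂ) → Matrix κ μ ℂ} {z : Fin n → ℂ} (hF : DiffM F z) (hK : DiffM K z) :
    DiffM (fun w => F w * K w) z := by
  intro a b
  simp only [Matrix.mul_apply]
  exact DifferentiableAt.fun_sum fun c _ => (hF a c).mul (hK c b)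

theorem wdM_mul {n : ℕ} {ι κ μ : Type*} [Fintype κ] (i : Fin n)
    {F : (Fin n → ℂ) → Matrix ι κ ℂ}
    {K : (Fin n → ℂ) → Matrix κ μ ℂ} {z : Fin n → ℂ} (hF : DiffM F z) (hK : DiffM K z) :
    wdM i (fun w => F w * K w) z = wdM i F z * K z + F z * wdM i K z := by
  ext a b
  simp only [wdM, Matrix.mul_apply, Matrix.of_apply, Matrix.add_apply]
  rw [wd_sum' Finset.univ i (fun c w => F w a c * K w c b) z
    (fun c _ => (hF a c).mul (hK c b)), ← Finset.sum_add_distrib]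
  exact Finset.sum_congr rfl fun c _ => wd_mul' i _ _ z (hF a c) (hK c b)

theorem diff_det {n m : ℕ} {F : (Fin n → ℂ) → Matrix (Fin m) (Fin m) ℂ} {z : Fin n → ℂ}
    (hF : DiffM F z) : DifferentiableAt ℝ (fun w => (F w).det) z := by
  simp only [Matrix.det_apply']
  refine DifferentiableAt.fun_sum fun σ _ => (differentiableAt_const _).mul ?_
  exact (HasFDerivAt.finsetProd (u := Finset.univ) (g := fun c w => F w (σ c) c)
    (fun c _ => (hF (σ c) c).hasFDerivAt)).differentiableAt

theorem DiffM.inv {n m : ℕ} {F : (Fin n → ℂ) → Matrix (Fin m) (Fin m) ℂ} {z : Fin n → ℂ}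
    (hF : DiffM F z) (hz : (F z).det ≠ 0) : DiffM (fun w => (F w)⁻¹) z := by
  intro a b
  simp only [Matrix.inv_def, Ring.inverse_eq_inv', Matrix.smul_apply, smul_eq_mul,
    Matrix.adjugate_apply]
  refine ((diff_det hF).inv hz).mul (diff_det ?_)
  intro c d
  by_cases h : c = b
  · subst h; simp
  · simpa [Matrix.updateRow_ne h] using hF c d

theorem wdM_inv {n m : ℕ} (i : Fin n) {F : (Fin n → ℂ) → Matrix (Fin m) (Fin m) ℂ}
    {z : Fin n → ℂ}
    (hF : DiffM F z) (hz : ∀ᶠ w in nhds z, (F w).det ≠ 0) :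
    wdM i (fun w => (F w)⁻¹) z = - ((F z)⁻¹ * wdM i F z * (F z)⁻¹) := by
  have hz0 := hz.self_of_nhds
  have h1 : wdM i (fun w => F w * (F w)⁻¹) z = 0 := by
    rw [wdM_congr i (K := fun _ => 1)]
    · ext a b; simp [wdM, wd_const']
    · filter_upwards [hz] with w hw
      exact Matrix.mul_nonsing_inv _ (isUnit_iff_ne_zero.mpr hw)
  rw [wdM_mul i hF (hF.inv hz0)] at h1
  have h2 : (F z)⁻¹ * F z = 1 := Matrix.nonsing_inv_mul _ (isUnit_iff_ne_zero.mpr hz0)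
  have h3 := congrArg (fun M => (F z)⁻¹ * M) h1
  simp only [mul_add, ← mul_assoc, h2, one_mul, mul_zero] at h3
  exact eq_neg_of_add_eq_zero_right h3

theorem wdM_fromBlocks {n : ℕ} {ι κ : Type*} (i : Fin n)
    (A : (Fin n → ℂ) → Matrix ι ι ℂ) (B : (Fin n → ℂ) → Matrix ι κ ℂ)
    (C : (Fin n → ℂ) → Matrix κ ι ℂ) (D : (Fin n → ℂ) → Matrix κ κ ℂ) (z : Fin n → ℂ) :
    wdM i (fun w => fromBlocks (A w) (B w) (C w) (D w)) z
      = fromBlocks (wdM i A z) (wdM i B z) (wdM i C z) (wdM i D z) := by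
  ext a b
  rcases a with a | a <;> rcases b with b | b <;> simp [wdM]

theorem DiffM.fromBlocks {n : ℕ} {ι κ : Type*}
    {A : (Fin n → ℂ) → Matrix ι ι ℂ} {B : (Fin n → ℂ) → Matrix ι κ ℂ}
    {C : (Fin n → ℂ) → Matrix κ ι ℂ} {D : (Fin n → ℂ) → Matrix κ κ ℂ} {z : Fin n → ℂ}
    (hA : DiffM A z) (hB : DiffM B z) (hC : DiffM C z) (hD : DiffM D z) :
    DiffM (fun w => Matrix.fromBlocks (A w) (B w) (C w) (D w)) z := by
  rintro (a | a) (b | b)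
  · exact hA a b
  · exact hB a b
  · exact hC a b
  · exact hD a b

theorem DiffM.const {n : ℕ} {ι κ : Type*} (A : Matrix ι κ ℂ) (z : Fin n → ℂ) :
    DiffM (fun _ => A) z := fun _ _ => differentiableAt_const _

theorem wdM_const {n : ℕ} {ι κ : Type*} (i : Fin n) (A : Matrix ι κ ℂ) (z : Fin n → ℂ) :
    wdM i (fun _ => A) z = 0 := by
  ext a b; simp [wdM, wd_const']

theorem DiffM.transpose {n : ℕ} {ι κ : Type*} {F : (Fin n → ℂ) → Matrix ι κ ℂ} {z : Fin n → ℂ}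
    (hF : DiffM F z) : DiffM (fun w => (F w)ᵀ) z := fun a b => hF b a

theorem wdM_transpose {n : ℕ} {ι κ : Type*} (i : Fin n) (F : (Fin n → ℂ) → Matrix ι κ ℂ)
    (z : Fin n → ℂ) : wdM i (fun w => (F w)ᵀ) z = (wdM i F z)ᵀ := rfl

theorem DiffM.conjTranspose {n : ℕ} {ι κ : Type*} {F : (Fin n → ℂ) → Matrix ι κ ℂ}
    {z : Fin n → ℂ}
    (hF : DiffM F z) : DiffM (fun w => (F w)ᴴ) z := fun a b => diff_conj' _ _ (hF b a)

/-- Factorization of `genMetric` for Hermitian `g`. -/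
theorem genMetric_eq {n : ℕ} (g β : Matrix (Fin n) (Fin n) ℂ) (hg : g.IsHermitian) :
    genMetric g β = fromBlocks 1 β 0 1 * fromBlocks g 0 0 (g⁻¹)ᵀ * fromBlocks 1 0 βᴴ 1 := by
  have h : (g⁻¹).map (starRingEnd ℂ) = (g⁻¹)ᵀ := by
    have := hg.inv
    ext a b
    have h2 := congrFun (congrFun this b) a
    simpa using h2
  unfold genMetric
  rw [h]
  simp [fromBlocks_multiply]

theorem genMetric_inv {n : ℕ} (g β : Matrix (Fin n) (Fin n) ℂ) (hg : g.PosDef) :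
    (genMetric g β)⁻¹ =
      fromBlocks 1 0 (-βᴴ) 1 * fromBlocks g⁻¹ 0 0 gᵀ * fromBlocks 1 (-β) 0 1 := by
  have h1 : g * g⁻¹ = 1 := Matrix.mul_nonsing_inv _ (isUnit_iff_ne_zero.mpr hg.det_pos.ne')
  have h2 : (g⁻¹)ᵀ * gᵀ = 1 := by rw [← Matrix.transpose_mul, h1, Matrix.transpose_one]
  rw [genMetric_eq g β hg.isHermitian]
  apply Matrix.inv_eq_right_inv
  have e1 : (fromBlocks 1 0 βᴴ 1 : Matrix (Fin n ⊕ Fin n) (Fin n ⊕ Fin n) ℂ) *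
      fromBlocks 1 0 (-βᴴ) 1 = 1 := by simp [fromBlocks_multiply]
  have e2 : (fromBlocks g 0 0 (g⁻¹)ᵀ : Matrix (Fin n ⊕ Fin n) (Fin n ⊕ Fin n) ℂ) *
      fromBlocks g⁻¹ 0 0 gᵀ = 1 := by simp [fromBlocks_multiply, h1, h2]
  have e3 : (fromBlocks 1 β 0 1 : Matrix (Fin n ⊕ Fin n) (Fin n ⊕ Fin n) ℂ) *
      fromBlocks 1 (-β) 0 1 = 1 := by simp [fromBlocks_multiply]
  calc _ = fromBlocks 1 β 0 1 * (fromBlocks g 0 0 (g⁻¹)ᵀ * ((fromBlocks 1 0 βᴴ 1 *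
      fromBlocks 1 0 (-βᴴ) 1) * fromBlocks g⁻¹ 0 0 gᵀ)) * fromBlocks 1 (-β) 0 1 := by
        simp only [mul_assoc]
    _ = 1 := by rw [e1, one_mul, e2, mul_one, e3]

/-- The connection form of `genMetric`, conjugated by the unipotent factor. -/
theorem genMetric_conn {n : ℕ} (i : Fin n) (g β : (Fin n → ℂ) → Matrix (Fin n) (Fin n) ℂ)
    (z : Fin n → ℂ) (hg : DiffM g z) (hβ : DiffM β z) (hp : ∀ᶠ w in nhds z, (g w).PosDef) :
    wdM i (fun w => genMetric (g w) (β w)) z * (genMetric (g z) (β z))⁻¹ =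
      fromBlocks 1 (β z) 0 1 *
      fromBlocks (wdM i g z * (g z)⁻¹) (wdM i β z)
        (((g z)⁻¹)ᵀ * wdM i (fun w => (β w)ᴴ) z * (g z)⁻¹) (-(wdM i g z * (g z)⁻¹)ᵀ) *
      fromBlocks 1 (-(β z)) 0 1 := by
  have hz := hp.self_of_nhds
  have hd : ∀ᶠ w in nhds z, (g w).det ≠ 0 := hp.mono fun w hw => hw.det_pos.ne'
  have hgi : DiffM (fun w => (g w)⁻¹) z := hg.inv hz.det_pos.ne'
  have hE : DiffM (fun w => (fromBlocks 1 (β w) 0 1 :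
      Matrix (Fin n ⊕ Fin n) (Fin n ⊕ Fin n) ℂ)) z :=
    (DiffM.const _ z).fromBlocks hβ (DiffM.const _ z) (DiffM.const _ z)
  have hD : DiffM (fun w => (fromBlocks (g w) 0 0 ((g w)⁻¹)ᵀ :
      Matrix (Fin n ⊕ Fin n) (Fin n ⊕ Fin n) ℂ)) z :=
    hg.fromBlocks (DiffM.const _ z) (DiffM.const _ z) hgi.transpose
  have hEs : DiffM (fun w => (fromBlocks 1 0 (β w)ᴴ 1 :
      Matrix (Fin n ⊕ Fin n) (Fin n ⊕ Fin n) ℂ)) z :=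
    (DiffM.const _ z).fromBlocks (DiffM.const _ z) hβ.conjTranspose (DiffM.const _ z)
  rw [wdM_congr i (hp.mono fun w hw => genMetric_eq (g w) (β w) hw.isHermitian),
    wdM_mul i (hE.mul hD) hEs, wdM_mul i hE hD, genMetric_inv _ _ hz,
    wdM_fromBlocks, wdM_fromBlocks, wdM_fromBlocks]
  simp only [wdM_const]
  rw [wdM_transpose i (fun w => (g w)⁻¹), wdM_inv i hg hd]
  have h1 : g z * (g z)⁻¹ = 1 := Matrix.mul_nonsing_inv _ (isUnit_iff_ne_zero.mpr hz.det_pos.ne')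
  have h2 : ((g z)⁻¹)ᵀ * (g z)ᵀ = 1 := by rw [← Matrix.transpose_mul, h1, Matrix.transpose_one]
  simp only [fromBlocks_multiply, fromBlocks_add, mul_zero, zero_mul, mul_one, one_mul, add_zero,
    zero_add, Matrix.transpose_neg, Matrix.transpose_mul, neg_mul, mul_neg, mul_assoc, h2,
    add_mul, mul_add, neg_add_rev, neg_neg]
  congr 1 <;> abel

/-- Squared Frobenius norm. -/
def fro {ι κ : Type*} [Fintype ι] [Fintype κ] (M : Matrix ι κ ℂ) : ℝ :=
  ∑ a, ∑ b, ‖M a b‖ ^ 2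

theorem fro_eq {ι κ : Type*} [Fintype ι] [Fintype κ] (M : Matrix ι κ ℂ) :
    (Matrix.trace (M * Mᴴ)) = (fro M : ℂ) := by
  simp [fro, Matrix.trace, Matrix.mul_apply, Complex.mul_conj, Complex.normSq_eq_norm_sq]

theorem fro_nonneg {ι κ : Type*} [Fintype ι] [Fintype κ] (M : Matrix ι κ ℂ) : 0 ≤ fro M :=
  Finset.sum_nonneg fun _ _ => Finset.sum_nonneg fun _ _ => sq_nonneg _

theorem fro_transpose {ι κ : Type*} [Fintype ι] [Fintype κ] (M : Matrix ι κ ℂ) :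
    fro Mᵀ = fro M := by
  unfold fro
  rw [Finset.sum_comm]
  rfl

theorem fro_neg {ι κ : Type*} [Fintype ι] [Fintype κ] (M : Matrix ι κ ℂ) :
    fro (-M) = fro M := by simp [fro]

theorem entry_le_fro {ι κ : Type*} [Fintype ι] [Fintype κ] (M : Matrix ι κ ℂ) (a : ι) (b : κ) :
    ‖M a b‖ ^ 2 ≤ fro M := by
  have h1 : ‖M a b‖ ^ 2 ≤ ∑ b, ‖M a b‖ ^ 2 :=
    Finset.single_le_sum (f := fun b => ‖M a b‖ ^ 2) (fun _ _ => sq_nonneg _) (Finset.mem_univ b)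
  have h2 : ∑ b, ‖M a b‖ ^ 2 ≤ fro M :=
    Finset.single_le_sum (f := fun a => ∑ b, ‖M a b‖ ^ 2)
      (fun _ _ => Finset.sum_nonneg fun _ _ => sq_nonneg _) (Finset.mem_univ a)
  exact h1.trans h2

theorem fro_blocks {ι : Type*} [Fintype ι] (M : Matrix (ι ⊕ ι) (ι ⊕ ι) ℂ) :
    fro M.toBlocks₁₁ + fro M.toBlocks₂₂ ≤ fro M := by
  have h1 : fro M = fro M.toBlocks₁₁ + fro M.toBlocks₁₂ + (fro M.toBlocks₂₁ + fro M.toBlocks₂₂) := by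
    simp [fro, Finset.sum_add_distrib, toBlocks₁₁, toBlocks₁₂, toBlocks₂₁, toBlocks₂₂]
    ring
  have := fro_nonneg M.toBlocks₁₂
  have := fro_nonneg M.toBlocks₂₁
  linarith

theorem four_pt (y r s : ℂ) :
    ‖y‖ ^ 2 ≤ ‖y - r‖ ^ 2 + ‖y - s‖ ^ 2 + ‖r‖ ^ 2 + ‖s‖ ^ 2 := by
  simp only [Complex.sq_norm, Complex.normSq_apply, Complex.sub_re, Complex.sub_im]
  nlinarith [sq_nonneg (y.re - r.re - s.re), sq_nonneg (y.im - r.im - s.im),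
    sq_nonneg (r.re - s.re), sq_nonneg (r.im - s.im)]

theorem fro_four {ι κ : Type*} [Fintype ι] [Fintype κ] (Y R S : Matrix ι κ ℂ) :
    fro Y ≤ fro (Y - R) + fro (Y - S) + fro R + fro S := by
  simp only [fro, ← Finset.sum_add_distrib]
  exact Finset.sum_le_sum fun a _ => Finset.sum_le_sum fun b _ => four_pt _ _ _

/-- The transformed tensor in a unitary frame. -/
def frameT {n : ℕ} {ι : Type*} [Fintype ι] (S : Matrix (Fin n) (Fin n) ℂ)
    (P W : Matrix ι ι ℂ) (X : Fin n → Matrix ι ι ℂ) (k : Fin n) : Matrix ι ι ℂ :=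
  ∑ i, S k i • (P * X i * W)

theorem frame_norm {n : ℕ} {ι : Type*} [Fintype ι] (S : Matrix (Fin n) (Fin n) ℂ)
    (P W : Matrix ι ι ℂ) (X : Fin n → Matrix ι ι ℂ) :
    (∑ i, ∑ j, ∑ A, ∑ B, ∑ D, ∑ E, (Sᴴ * S) j i * (Pᴴ * P) B A * (W * Wᴴ) D E * X i A D *
      (starRingEnd ℂ) (X j B E)) = ((∑ k, fro (frameT S P W X k) : ℝ) : ℂ) := by
  have h1 : ∀ i j, (∑ A, ∑ B, ∑ D, ∑ E, (Sᴴ * S) j i * (Pᴴ * P) B A * (W * Wᴴ) D E * X i A D *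
      (starRingEnd ℂ) (X j B E)) =
      (Sᴴ * S) j i * Matrix.trace ((P * X i * W) * (P * X j * W)ᴴ) := by
    intro i j
    have h2 : Matrix.trace ((P * X i * W) * (P * X j * W)ᴴ)
        = Matrix.trace ((Pᴴ * P) * (X i * ((W * Wᴴ) * (X j)ᴴ))) := by
      rw [Matrix.conjTranspose_mul, Matrix.conjTranspose_mul]
      rw [show P * X i * W * (Wᴴ * ((X j)ᴴ * Pᴴ)) = (P * (X i * ((W * Wᴴ) * (X j)ᴴ))) * Pᴴ by
        simp only [mul_assoc], Matrix.trace_mul_comm, ← mul_assoc Pᴴ P]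
    rw [h2, Matrix.trace, Finset.mul_sum, Finset.sum_comm]
    refine Finset.sum_congr rfl fun B _ => ?_
    rw [Matrix.diag_apply, Matrix.mul_apply (M := Pᴴ * P), Finset.mul_sum]
    refine Finset.sum_congr rfl fun A _ => ?_
    rw [Matrix.mul_apply (M := X i), Finset.mul_sum, Finset.mul_sum]
    refine Finset.sum_congr rfl fun D _ => ?_
    rw [Matrix.mul_apply (N := (X j)ᴴ), Finset.mul_sum, Finset.mul_sum, Finset.mul_sum]
    refine Finset.sum_congr rfl fun E _ => ?_
    rw [Matrix.conjTranspose_apply, starRingEnd_apply]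
    ring
  simp only [h1]
  push_cast
  simp only [← fro_eq, frameT, Matrix.conjTranspose_sum, Matrix.conjTranspose_smul,
    Matrix.sum_mul, Matrix.mul_sum, Matrix.trace_sum, Matrix.smul_mul, Matrix.mul_smul,
    Matrix.trace_smul, smul_eq_mul, Finset.mul_sum]
  rw [Finset.sum_comm]
  conv_rhs => rw [Finset.sum_comm]
  refine Finset.sum_congr rfl fun j _ => ?_
  conv_rhs => rw [Finset.sum_comm]
  refine Finset.sum_congr rfl fun i _ => ?_
  rw [Matrix.mul_apply, Finset.sum_mul]
  refine Finset.sum_congr rfl fun k _ => ?_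
  rw [Matrix.conjTranspose_apply]
  ring

theorem frameT_sub {n : ℕ} {ι : Type*} [Fintype ι] (S : Matrix (Fin n) (Fin n) ℂ)
    (P W : Matrix ι ι ℂ) (X Y : Fin n → Matrix ι ι ℂ) (k : Fin n) :
    frameT S P W (fun i => X i - Y i) k = frameT S P W X k - frameT S P W Y k := by
  simp [frameT, mul_sub, sub_mul, smul_sub, Finset.sum_sub_distrib]

theorem mul_bound {n : ℕ} {A C : Matrix (Fin n) (Fin n) ℂ} {x y : ℝ}
    (hA : ∀ a b, ‖A a b‖ ≤ x) (hC : ∀ a b, ‖C a b‖ ≤ y) (a b : Fin n) :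
    ‖(A * C) a b‖ ≤ n * (x * y) := by
  rw [Matrix.mul_apply]
  refine (norm_sum_le _ _).trans ?_
  refine (Finset.sum_le_sum (g := fun _ => x * y) fun c _ => ?_).trans (by simp)
  rw [norm_mul]
  exact mul_le_mul (hA _ _) (hC _ _) (norm_nonneg _) ((norm_nonneg _).trans (hA a c))

theorem frameT_bound {n : ℕ} {S P W : Matrix (Fin n) (Fin n) ℂ} {X : Fin n → Matrix (Fin n) (Fin n) ℂ}
    {s p w x : ℝ} (hS : ∀ a b, ‖S a b‖ ≤ s) (hP : ∀ a b, ‖P a b‖ ≤ p) (hW : ∀ a b, ‖W a b‖ ≤ w)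
    (hX : ∀ i a b, ‖X i a b‖ ≤ x) :
    ∑ k, fro (frameT S P W X k) ≤
      n * (n * (n * (n * (s * (n * ((n * (p * x)) * w)))) ^ 2)) := by
  have h : ∀ k a b, ‖frameT S P W X k a b‖ ≤ n * (s * (n * ((n * (p * x)) * w))) := by
    intro k a b
    rw [frameT, Matrix.sum_apply]
    refine (norm_sum_le _ _).trans ?_
    refine (Finset.sum_le_sum (g := fun _ => s * (n * ((n * (p * x)) * w))) fun c _ => ?_).trans
      (by simp)
    rw [Matrix.smul_apply, norm_smul]
    exact mul_le_mul (hS _ _) (mul_bound (mul_bound hP (hX c)) hW a b) (norm_nonneg _)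
      ((norm_nonneg _).trans (hS k c))
  unfold fro
  refine (Finset.sum_le_sum (g := fun _ => (n * (n * (n * (s * (n * ((n * (p * x)) * w)))) ^ 2) : ℝ))
    fun k _ => ?_).trans (by simp)
  refine (Finset.sum_le_sum (g := fun _ => (n * (n * (s * (n * ((n * (p * x)) * w)))) ^ 2 : ℝ))
    fun a _ => ?_).trans (by simp)
  refine (Finset.sum_le_sum (g := fun _ => ((n * (s * (n * ((n * (p * x)) * w)))) ^ 2 : ℝ))
    fun b _ => ?_).trans (by simp)
  exact pow_le_pow_left₀ (norm_nonneg _) (h k a b) 2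

theorem exists_frame {n : ℕ} {g : Matrix (Fin n) (Fin n) ℂ} (hg : g.PosDef) :
    ∃ P W : Matrix (Fin n) (Fin n) ℂ, g⁻¹ = Pᴴ * P ∧ g = W * Wᴴ ∧ W * P = 1 ∧ P * W = 1 := by
  open scoped MatrixOrder in
  obtain ⟨P, hP⟩ := CStarAlgebra.nonneg_iff_eq_star_mul_self.mp hg.inv.posSemidef.nonneg
  have hgd : IsUnit g.det := isUnit_iff_ne_zero.mpr hg.det_pos.ne'
  rw [Matrix.star_eq_conjTranspose] at hP
  have hu : IsUnit P.det := by
    have h := congrArg Matrix.det hP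
    rw [Matrix.det_mul] at h
    have h2 : IsUnit (g⁻¹).det := by rw [Matrix.det_nonsing_inv]; exact hgd.ringInverse
    rw [h] at h2
    exact isUnit_of_mul_isUnit_right h2
  refine ⟨P, P⁻¹, hP, ?_, Matrix.nonsing_inv_mul _ hu, Matrix.mul_nonsing_inv _ hu⟩
  have h : g = (g⁻¹)⁻¹ := (Matrix.nonsing_inv_nonsing_inv _ hgd).symm
  rw [h, hP, Matrix.mul_inv_rev, Matrix.conjTranspose_nonsing_inv]

theorem row_bound {n : ℕ} {W : Matrix (Fin n) (Fin n) ℂ} {a : Fin n} {C : ℝ}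
    (h : ((W * Wᴴ) a a).re ≤ C) (b : Fin n) : ‖W a b‖ ≤ Real.sqrt C := by
  apply Real.le_sqrt_of_sq_le
  refine le_trans ?_ h
  simp only [Matrix.mul_apply, Matrix.conjTranspose_apply, Complex.re_sum]
  have : ∀ c, (W a c * star (W a c)).re = ‖W a c‖ ^ 2 := by
    intro c
    rw [← starRingEnd_apply, Complex.mul_conj, Complex.ofReal_re, Complex.normSq_eq_norm_sq]
  simp only [this]
  exact Finset.single_le_sum (f := fun c => ‖W a c‖ ^ 2) (fun _ _ => sq_nonneg _)
    (Finset.mem_univ b)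

theorem inv_compare {n : ℕ} {g gt : Matrix (Fin n) (Fin n) ℂ} {Λ : ℝ} (hΛ : 0 < Λ)
    (hg : g.PosDef) (hgt : gt.PosDef) (h : (g - ((Λ : ℂ))⁻¹ • gt).PosSemidef) :
    ((Λ : ℂ) • gt⁻¹ - g⁻¹).PosSemidef := by
  have hΛ' : (0 : ℂ) < (Λ : ℂ) := by exact_mod_cast hΛ
  have hD : ((Λ : ℂ) • gt⁻¹).PosDef := hgt.inv.smul hΛ'
  let _ := hg.isUnit.invertible
  let _ := hD.isUnit.invertible
  have hi : ((Λ : ℂ) • gt⁻¹)⁻¹ = ((Λ : ℂ))⁻¹ • gt := by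
    apply Matrix.inv_eq_right_inv
    rw [Matrix.smul_mul, Matrix.mul_smul, smul_smul, mul_inv_cancel₀ hΛ'.ne', one_smul]
    exact Matrix.nonsing_inv_mul _ (isUnit_iff_ne_zero.mpr hgt.det_pos.ne')
  have h1 := (Matrix.PosDef.fromBlocks₂₂ g 1 hD).2 (by rw [hi]; simpa using h)
  have h2 := (Matrix.PosDef.fromBlocks₁₁ 1 ((Λ : ℂ) • gt⁻¹) hg).1 h1
  simpa using h2

theorem diag_le {n : ℕ} {g gt : Matrix (Fin n) (Fin n) ℂ} {Λ B : ℝ} (hΛ : 0 < Λ)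
    (h : ((Λ : ℂ) • gt - g).PosSemidef) (a : Fin n) (hB : ‖gt a a‖ ≤ B) :
    (g a a).re ≤ Λ * B := by
  have h1 := (Complex.le_def.1 (h.diag_nonneg (i := a))).1
  simp at h1
  have h2 : (gt a a).re ≤ B := (Complex.re_le_norm _).trans hB
  nlinarith

theorem beta_norm {n : ℕ} (P β : Matrix (Fin n) (Fin n) ℂ) :
    (∑ i : Fin n, ∑ k : Fin n, ∑ j : Fin n, ∑ l : Fin n,
            β i k * (starRingEnd ℂ) (β j l) * (Pᴴ * P) j i * (Pᴴ * P) l k)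
      = (fro (P * β * Pᵀ) : ℂ) := by
  rw [← fro_eq]
  have h : Matrix.trace ((P * β * Pᵀ) * (P * β * Pᵀ)ᴴ)
      = Matrix.trace (β * ((Pᴴ * P)ᵀ * (βᴴ * (Pᴴ * P)))) := by
    have e1 : (Pᴴ * P)ᵀ = Pᵀ * (Pᵀ)ᴴ := by
      rw [Matrix.transpose_mul]; rfl
    rw [e1, Matrix.conjTranspose_mul, Matrix.conjTranspose_mul]
    rw [show P * β * Pᵀ * ((Pᵀ)ᴴ * (βᴴ * Pᴴ)) = P * (β * (Pᵀ * (Pᵀ)ᴴ * (βᴴ * Pᴴ))) by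
      simp only [mul_assoc], Matrix.trace_mul_comm]
    simp only [mul_assoc]
  rw [h, Matrix.trace]
  refine Finset.sum_congr rfl fun i _ => ?_
  rw [Matrix.diag_apply, Matrix.mul_apply (M := β)]
  refine Finset.sum_congr rfl fun k _ => ?_
  rw [Matrix.mul_apply (M := (Pᴴ * P)ᵀ), Finset.mul_sum, Finset.sum_comm]
  refine Finset.sum_congr rfl fun l _ => ?_
  rw [Matrix.mul_apply (M := βᴴ), Finset.mul_sum, Finset.mul_sum]
  refine Finset.sum_congr rfl fun j _ => ?_
  rw [Matrix.conjTranspose_apply, Matrix.transpose_apply, starRingEnd_apply]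
  ring

theorem UpsS_eq {n : ℕ} {ι : Type*} [Fintype ι] [DecidableEq ι]
    (G Gt : (Fin n → ℂ) → Matrix ι ι ℂ) (i : Fin n) (A D : ι) (z : Fin n → ℂ) :
    UpsS G Gt i A D z = (wdM i G z * (G z)⁻¹ - wdM i Gt z * (Gt z)⁻¹) A D := by
  rw [UpsS, Finset.sum_sub_distrib, Matrix.sub_apply, Matrix.mul_apply, Matrix.mul_apply]
  rfl

theorem upsNormS_eq {n : ℕ} {ι : Type*} [Fintype ι] [DecidableEq ι]
    (g : (Fin n → ℂ) → Matrix (Fin n) (Fin n) ℂ)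
    (G Gt : (Fin n → ℂ) → Matrix ι ι ℂ) (z : Fin n → ℂ)
    {S : Matrix (Fin n) (Fin n) ℂ} {P W : Matrix ι ι ℂ} (hS : (g z)⁻¹ = Sᴴ * S)
    (hP : (G z)⁻¹ = Pᴴ * P) (hW : G z = W * Wᴴ) :
    (upsNormS g G Gt G z).re = ∑ k, fro (frameT S P W
      (fun i => wdM i G z * (G z)⁻¹ - wdM i Gt z * (Gt z)⁻¹) k) := by
  have h := frame_norm S P W (fun i => wdM i G z * (G z)⁻¹ - wdM i Gt z * (Gt z)⁻¹)
  rw [← Complex.ofReal_re (∑ k, fro _), ← h, ← hS, ← hP, ← hW]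
  simp only [upsNormS, UpsS_eq]

/-- The block computation: the diagonal blocks of the conjugated difference. -/
theorem block_diff {n : ℕ} (β βt a b c aat bt ct : Matrix (Fin n) (Fin n) ℂ)
    (P W : Matrix (Fin n) (Fin n) ℂ) :
    ∃ X Y : Matrix (Fin n) (Fin n) ℂ,
    (fromBlocks P 0 0 Wᵀ * fromBlocks 1 (-β) 0 1) *
      (fromBlocks 1 β 0 1 * fromBlocks a b c (-aᵀ) * fromBlocks 1 (-β) 0 1
        - fromBlocks 1 βt 0 1 * fromBlocks aat bt ct (-aatᵀ) * fromBlocks 1 (-βt) 0 1) *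
      (fromBlocks 1 β 0 1 * fromBlocks W 0 0 Pᵀ)
    = fromBlocks (P * ((a - aat) - (βt - β) * ct) * W) X Y
        (-(P * ((a - aat) - (ct * (βt - β))ᵀ) * W)ᵀ) := by
  have hex : ∀ (M : Matrix (Fin n ⊕ Fin n) (Fin n ⊕ Fin n) ℂ) (C D : Matrix (Fin n) (Fin n) ℂ),
      M.toBlocks₁₁ = C → M.toBlocks₂₂ = D → ∃ X Y, M = fromBlocks C X Y D := by
    rintro M C D rfl rfl
    exact ⟨_, _, (Matrix.fromBlocks_toBlocks M).symm⟩
  apply hex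
  · simp only [sub_eq_add_neg, fromBlocks_neg, fromBlocks_multiply, fromBlocks_add,
      toBlocks_fromBlocks₁₁]
    simp only [Matrix.mul_zero, Matrix.zero_mul, Matrix.mul_one, Matrix.one_mul, add_zero,
      zero_add, neg_zero]
    noncomm_ring
  · simp only [sub_eq_add_neg, fromBlocks_neg, fromBlocks_multiply, fromBlocks_add,
      toBlocks_fromBlocks₂₂, Matrix.transpose_mul, Matrix.transpose_add, Matrix.transpose_neg,
      Matrix.transpose_transpose]
    simp only [Matrix.mul_zero, Matrix.zero_mul, Matrix.mul_one, Matrix.one_mul, add_zero,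
      zero_add, neg_zero]
    noncomm_ring

theorem frame_compare {n : ℕ} (S P W : Matrix (Fin n) (Fin n) ℂ)
    (Pb Wb : Matrix (Fin n ⊕ Fin n) (Fin n ⊕ Fin n) ℂ)
    (Z : Fin n → Matrix (Fin n ⊕ Fin n) (Fin n ⊕ Fin n) ℂ)
    (Y R T : Fin n → Matrix (Fin n) (Fin n) ℂ)
    (h : ∀ i, ∃ A C, Pb * Z i * Wb =
      fromBlocks (P * (Y i - R i) * W) A C (-(P * (Y i - T i) * W)ᵀ)) :
    ∑ k, fro (frameT S P W Y k) ≤ ∑ k, fro (frameT S Pb Wb Z k) +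
      (∑ k, fro (frameT S P W R k) + ∑ k, fro (frameT S P W T k)) := by
  rw [← Finset.sum_add_distrib, ← Finset.sum_add_distrib]
  refine Finset.sum_le_sum fun k _ => ?_
  have h1 := fro_four (frameT S P W Y k) (frameT S P W R k) (frameT S P W T k)
  rw [← frameT_sub, ← frameT_sub] at h1
  have h2 := fro_blocks (frameT S Pb Wb Z k)
  have h3 : (frameT S Pb Wb Z k).toBlocks₁₁ = frameT S P W (fun i => Y i - R i) k := by
    ext a b
    simp only [frameT, toBlocks₁₁, Matrix.of_apply, Matrix.sum_apply, Matrix.smul_apply]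
    refine Finset.sum_congr rfl fun i _ => ?_
    obtain ⟨A, C, hAC⟩ := h i
    rw [hAC, fromBlocks_apply₁₁]
  have h4 : (frameT S Pb Wb Z k).toBlocks₂₂ = -(frameT S P W (fun i => Y i - T i) k)ᵀ := by
    ext a b
    simp only [frameT, toBlocks₂₂, Matrix.of_apply, Matrix.sum_apply, Matrix.smul_apply,
      Matrix.neg_apply, Matrix.transpose_apply]
    rw [← Finset.sum_neg_distrib]
    refine Finset.sum_congr rfl fun i _ => ?_
    obtain ⟨A, C, hAC⟩ := h i
    rw [hAC, fromBlocks_apply₂₂, Matrix.neg_apply, Matrix.transpose_apply, smul_neg]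
  rw [h3, h4, fro_neg, fro_transpose] at h2
  linarith

/-- Lemma 3.5: pointwise comparison of connection differences. If at `z`
the metrics satisfy `Λ⁻¹·g̃ ≤ g ≤ Λ·g̃` and `|β|²_g ≤ Λ`, then
`|Υ^g|²_g ≤ Λ²·|Υ|²_{g⁻¹,G⁻¹,G} + K` where `K` depends only on `n`, `Λ` and an upper
bound `B` at `z` for the entries of `g̃`, `g̃⁻¹`, `β̃` and their first Wirtinger derivatives. -/
theorem connection_difference_comparison (n : ℕ) (hn : 0 < n) (Λ B : ℝ) (hΛ : 1 ≤ Λ) :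
    ∃ K : ℝ,
      ∀ (U : Set (Fin n → ℂ)), IsOpen U →
      ∀ g gt β βt : (Fin n → ℂ) → Matrix (Fin n) (Fin n) ℂ, ∀ z : Fin n → ℂ, z ∈ U →
        (∀ a b : Fin n, ContDiffOn ℝ 1 (fun w => g w a b) U) →
        (∀ a b : Fin n, ContDiffOn ℝ 1 (fun w => gt w a b) U) →
        (∀ a b : Fin n, ContDiffOn ℝ 1 (fun w => β w a b) U) →
        (∀ a b : Fin n, ContDiffOn ℝ 1 (fun w => βt w a b) U) →
        (∀ w ∈ U, (g w).PosDef) → (∀ w ∈ U, (gt w).PosDef) →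
        (∀ w ∈ U, (β w)ᵀ = -(β w)) → (∀ w ∈ U, (βt w)ᵀ = -(βt w)) →
        (g z - ((Λ : ℂ))⁻¹ • gt z).PosSemidef →
        ((Λ : ℂ) • gt z - g z).PosSemidef →
        ((∑ i : Fin n, ∑ k : Fin n, ∑ j : Fin n, ∑ l : Fin n,
            β z i k * (starRingEnd ℂ) (β z j l) * (g z)⁻¹ j i * (g z)⁻¹ l k).re ≤ Λ) →
        (∀ a b : Fin n,
          BoundedDerivs1 B (fun w => gt w a b) z ∧
          BoundedDerivs1 B (fun w => (gt w)⁻¹ a b) z ∧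
          BoundedDerivs1 B (fun w => βt w a b) z) →
        (upsNormS g g gt g z).re ≤
          Λ ^ 2 * (upsNormS g (fun w => genMetric (g w) (β w))
              (fun w => genMetric (gt w) (βt w)) (fun w => genMetric (g w) (β w)) z).re
            + K := by
  set s : ℝ := Real.sqrt (Λ * B) with hs
  set q : ℝ := B + n * ((n * (s * Real.sqrt Λ)) * s) with hq
  set θ : ℝ := n * ((n * (B * B)) * B) with hθ
  set KK : ℝ := n * (n * (n * (n * (s * (n * ((n * (s * (n * (q * θ)))) * s)))) ^ 2)) with hKK
  refine ⟨KK + KK, ?_⟩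
  intro U hU g gt β βt z hz cg cgt cβ cβt pg pgt _ _ hlow hup hβ hB
  have hΛ0 : 0 < Λ := by linarith
  have hnhd := hU.mem_nhds hz
  have dg : DiffM g z := fun a b => ((cg a b).contDiffAt hnhd).differentiableAt one_ne_zero
  have dgt : DiffM gt z := fun a b => ((cgt a b).contDiffAt hnhd).differentiableAt one_ne_zero
  have dβ : DiffM β z := fun a b => ((cβ a b).contDiffAt hnhd).differentiableAt one_ne_zero
  have dβt : DiffM βt z := fun a b => ((cβt a b).contDiffAt hnhd).differentiableAt one_ne_zero
  have epg : ∀ᶠ w in nhds z, (g w).PosDef := Filter.eventually_of_mem hnhd pg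
  have epgt : ∀ᶠ w in nhds z, (gt w).PosDef := Filter.eventually_of_mem hnhd pgt
  have pgz := pg z hz
  have pgtz := pgt z hz
  obtain ⟨P, W, hP, hW, hWP, hPW⟩ := exists_frame pgz
  -- bounds on the frames
  have bW : ∀ a b, ‖W a b‖ ≤ s := by
    intro a b
    apply row_bound
    rw [← hW]
    exact diag_le hΛ0 hup a (hB a a).1.1
  have bP : ∀ a b, ‖P a b‖ ≤ s := by
    intro a b
    have h := row_bound (W := Pᴴ) (a := b) (C := Λ * B) (by
      rw [Matrix.conjTranspose_conjTranspose, ← hP]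
      exact diag_le hΛ0 (inv_compare hΛ0 pgz pgtz hlow) b (hB b b).2.1.1) a
    rwa [Matrix.conjTranspose_apply, norm_star] at h
  -- bound on β
  have bβ : ∀ a b, ‖β z a b‖ ≤ n * ((n * (s * Real.sqrt Λ)) * s) := by
    rw [hP, beta_norm, Complex.ofReal_re] at hβ
    have hQ : ∀ a b, ‖(P * β z * Pᵀ) a b‖ ≤ Real.sqrt Λ := fun a b =>
      Real.le_sqrt_of_sq_le ((entry_le_fro _ a b).trans hβ)
    have hPt : Pᵀ * Wᵀ = 1 := by rw [← Matrix.transpose_mul, hWP, Matrix.transpose_one]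
    have e : β z = W * (P * β z * Pᵀ) * Wᵀ := by
      calc β z = (W * P) * β z * (Pᵀ * Wᵀ) := by rw [hWP, hPt, one_mul, mul_one]
        _ = _ := by simp only [mul_assoc]
    intro a b
    rw [e]
    exact mul_bound (mul_bound bW hQ) (fun c d => bW d c) a b
  have bγ : ∀ a b, ‖(βt z - β z) a b‖ ≤ q := fun a b =>
    (norm_sub_le _ _).trans (add_le_add (hB a b).2.2.1 (bβ a b))
  -- the lower-left block of the connection of the background generalized metric
  set Θ : Fin n → Matrix (Fin n) (Fin n) ℂ := fun i =>
    ((gt z)⁻¹)ᵀ * wdM i (fun w => (βt w)ᴴ) z * (gt z)⁻¹ with hΘ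
  have bΘ : ∀ i a b, ‖Θ i a b‖ ≤ θ := by
    intro i a b
    refine mul_bound (mul_bound (fun c d => (hB d c).2.1.1) ?_) (fun c d => (hB c d).2.1.1) a b
    intro c d
    have : wdM i (fun w => (βt w)ᴴ) z c d = (starRingEnd ℂ) (wdb i (fun w => βt w d c) z) :=
      wd_conj' i _ z (dβt d c)
    rw [this, RCLike.norm_conj]
    exact ((hB d c).2.2.2 i).2
  have b1 := frameT_bound bP bP bW (X := fun i => (βt z - β z) * Θ i)
    (x := n * (q * θ)) (fun i a b => mul_bound bγ (bΘ i) a b)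
  have b2 := frameT_bound bP bP bW (X := fun i => (Θ i * (βt z - β z))ᵀ)
    (x := n * (q * θ)) (fun i a b => by
      rw [mul_comm q θ]; exact mul_bound (bΘ i) bγ b a)
  -- the frames of the generalized metric
  have hPb : (genMetric (g z) (β z))⁻¹ = (fromBlocks P 0 0 Wᵀ * fromBlocks 1 (-(β z)) 0 1)ᴴ *
      (fromBlocks P 0 0 Wᵀ * fromBlocks 1 (-(β z)) 0 1) := by
    have e2 : (Wᵀ)ᴴ * Wᵀ = (g z)ᵀ := by
      conv_rhs => rw [hW, Matrix.transpose_mul]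
      rfl
    have e3 : (fromBlocks (g z)⁻¹ 0 0 (g z)ᵀ : Matrix (Fin n ⊕ Fin n) (Fin n ⊕ Fin n) ℂ) =
        (fromBlocks P 0 0 Wᵀ)ᴴ * fromBlocks P 0 0 Wᵀ := by
      rw [fromBlocks_conjTranspose, fromBlocks_multiply, hP, ← e2]
      simp
    rw [genMetric_inv _ _ pgz, e3, Matrix.conjTranspose_mul, fromBlocks_conjTranspose 1]
    simp [mul_assoc]
  have hWb : genMetric (g z) (β z) = (fromBlocks 1 (β z) 0 1 * fromBlocks W 0 0 Pᵀ) *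
      (fromBlocks 1 (β z) 0 1 * fromBlocks W 0 0 Pᵀ)ᴴ := by
    have e2 : Pᵀ * (Pᵀ)ᴴ = ((g z)⁻¹)ᵀ := by
      rw [hP, Matrix.transpose_mul]
      rfl
    have e3 : (fromBlocks (g z) 0 0 ((g z)⁻¹)ᵀ : Matrix (Fin n ⊕ Fin n) (Fin n ⊕ Fin n) ℂ) =
        fromBlocks W 0 0 Pᵀ * (fromBlocks W 0 0 Pᵀ)ᴴ := by
      rw [fromBlocks_conjTranspose, fromBlocks_multiply, e2]
      simp [← hW]
    rw [genMetric_eq _ _ pgz.isHermitian, e3, Matrix.conjTranspose_mul,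
      fromBlocks_conjTranspose 1]
    simp [mul_assoc]
  have key := frame_compare P P W _ _
    (fun i => wdM i (fun w => genMetric (g w) (β w)) z * (genMetric (g z) (β z))⁻¹ -
      wdM i (fun w => genMetric (gt w) (βt w)) z * (genMetric (gt z) (βt z))⁻¹)
    (fun i => wdM i g z * (g z)⁻¹ - wdM i gt z * (gt z)⁻¹)
    (fun i => (βt z - β z) * Θ i) (fun i => (Θ i * (βt z - β z))ᵀ) (fun i => by
      rw [genMetric_conn i g β z dg dβ epg, genMetric_conn i gt βt z dgt dβt epgt]
      exact block_diff (β z) (βt z) _ _ _ _ _ _ P W)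
  rw [← upsNormS_eq g g gt z hP hP hW,
    ← upsNormS_eq g (fun w => genMetric (g w) (β w)) (fun w => genMetric (gt w) (βt w)) z
      hP hPb hWb] at key
  have hN : 0 ≤ (upsNormS g (fun w => genMetric (g w) (β w))
              (fun w => genMetric (gt w) (βt w)) (fun w => genMetric (g w) (β w)) z).re := by
    rw [upsNormS_eq g (fun w => genMetric (g w) (β w)) (fun w => genMetric (gt w) (βt w)) z
      hP hPb hWb]
    exact Finset.sum_nonneg fun _ _ => fro_nonneg _
  have hΛ2 : 1 ≤ Λ ^ 2 := one_le_pow₀ hΛ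
  have := mul_le_mul_of_nonneg_right hΛ2 hN
  linarith
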